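/- Let d ≥ 1 and N ≥ N_min := d(d+1)/2. Let A ∈ ℝ^{N×N_min} have rank N_min. Define C(A) = (N / (N_min·d·(d+2))) · Tr((AᵀA)⁻¹(1_d·1_dᵀ + 2I)), where each row of A is h(q_i) for a unit vector q_i ∈ ℝ^d (so that Tr(AᵀA) = N and 1_dᵀ·AᵀA·1_d-related identities hold, in particular Aᵀ·A satisfies Tr(1_d 1_dᵀ Aᵀ A) = N). Then C(A) ≥ 1, with equality if and only if AᵀA = (N/(d(d+2)))·(1_d·1_dᵀ + 2I). -/

import Mathlib

open Matrix

abbrev Idx (d : ℕ) : Type := Fin d ⊕ {p : Fin d × Fin d // p.1 < p.2}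

/-- The half-vectorized outer-product map
`h(q) = (q_1², …, q_d², √2 q_1 q_2, …, √2 q_{d-1} q_d)`. -/
noncomputable def hvec {d : ℕ} (q : Fin d → ℝ) : Idx d → ℝ :=
  Sum.elim (fun i => q i ^ 2) (fun p => Real.sqrt 2 * (q p.1.1 * q p.1.2))

/-- The vector `1_d ∈ ℝ^{d(d+1)/2}`: first `d` entries `1`, the rest `0`. -/
def oneVec (d : ℕ) : Idx d → ℝ := Sum.elim 1 0

/-- The matrix `1_d 1_dᵀ`. -/
noncomputable def Jmat (d : ℕ) : Matrix (Idx d) (Idx d) ℝ :=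
  vecMulVec (oneVec d) (oneVec d)

/-- The C-cost `C(A) = (N / (N_min d (d+2))) Tr((AᵀA)⁻¹ (1_d 1_dᵀ + 2I))`. -/
noncomputable def Ccost {d N : ℕ} (A : Matrix (Fin N) (Idx d) ℝ) : ℝ :=
  ((N : ℝ) / (((d * (d + 1) / 2 : ℕ) : ℝ) * ((d : ℝ) * ((d : ℝ) + 2)))) *
    ((Aᵀ * A)⁻¹ * (Jmat d + (2 : ℝ) • (1 : Matrix (Idx d) (Idx d) ℝ))).trace

/-!
Let `M = AᵀA` and `W = 1_d 1_dᵀ + 2I`. For positive definite `M` and `S`, writing `D = M - S`,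
`0 ≤ tr (S⁻¹ D M⁻¹ Dᴴ) = tr (S⁻¹ M) + tr (M⁻¹ S) - 2n`, with equality only at `D = 0`. Choosing
`S = c W` with `c = tr (W⁻¹ M) / n` gives `n² ≤ tr (W⁻¹ M) tr (M⁻¹ W)`. Since `W⁻¹` is a combination
of `I` and `1_d 1_dᵀ`, the factor `tr (W⁻¹ M)` depends only on `tr M` and `1_dᵀ M 1_d`, both equal
to `N` here, and after division by `n²` the right-hand side becomes the C-cost.
-/

section MatrixAlgebra

variable {m n R K : Type*} [Fintype n] [Field K]

theorem mulVec_injective_of_rank_eq_card [Finite m] [CommRing R] [Nontrivial R] {A : Matrix m n R}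
    (hA : A.rank = Fintype.card n) : Function.Injective A.mulVec := by
  rw [mulVec_injective_iff, linearIndependent_iff_card_eq_finrank_span, Set.finrank,
    ← rank_eq_finrank_span_cols, hA]

theorem nonsing_inv_smul_of_ne_zero [DecidableEq n] {c : K} (hc : c ≠ 0) {S : Matrix n n K}
    (hS : IsUnit S) : (c • S)⁻¹ = c⁻¹ • S⁻¹ :=
  inv_smul' S (Units.mk0 c hc) ((isUnit_iff_isUnit_det S).mp hS)

theorem inv_vecMulVec_add_smul_one [DecidableEq n] {c : K} {u v : n → K} (hc : c ≠ 0)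
    (huv : v ⬝ᵥ u + c ≠ 0) :
    (vecMulVec u v + c • (1 : Matrix n n K))⁻¹
      = c⁻¹ • (1 - (v ⬝ᵥ u + c)⁻¹ • vecMulVec u v) := by
  refine inv_eq_left_inv ?_
  have hsq : vecMulVec u v * vecMulVec u v = (v ⬝ᵥ u) • vecMulVec u v := by
    rw [vecMulVec_mul_vecMulVec, vecMulVec_smul]
  simp only [smul_mul_assoc, mul_add, sub_mul, hsq, Matrix.one_mul, mul_smul_comm, Matrix.mul_one]
  match_scalars <;> field_simp
  ring

theorem trace_transpose_mul_self [Fintype m] [CommSemiring R] (A : Matrix m n R) :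
    (Aᵀ * A).trace = ∑ i, A i ⬝ᵥ A i := by
  rw [trace_mul_comm]
  rfl

theorem trace_vecMulVec_self_mul_transpose_mul_self [Fintype m] [CommSemiring R] (v : n → R)
    (A : Matrix m n R) :
    (vecMulVec v v * (Aᵀ * A)).trace = ∑ i, (v ⬝ᵥ A i) ^ 2 := by
  rw [← Matrix.mul_assoc, trace_mul_comm, vecMulVec_mul, mul_vecMulVec, vecMul_transpose,
    trace_vecMulVec]
  simp only [dotProduct, mulVec, sq, mul_comm]

theorem trace_inv_mul_sub_mul_inv_mul_sub [DecidableEq n] [CommRing R] {M S : Matrix n n R}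
    (hM : IsUnit M) (hS : IsUnit S) :
    (S⁻¹ * ((M - S) * M⁻¹ * (M - S))).trace
      = (S⁻¹ * M).trace + (M⁻¹ * S).trace - 2 * Fintype.card n := by
  rw [isUnit_iff_isUnit_det] at hM hS
  have hexpand : S⁻¹ * ((M - S) * M⁻¹ * (M - S)) = S⁻¹ * M + M⁻¹ * S - 1 - 1 := by
    simp only [sub_mul, mul_sub, mul_nonsing_inv _ hM, Matrix.one_mul, Matrix.mul_assoc,
      nonsing_inv_mul _ hM, nonsing_inv_mul _ hS, Matrix.mul_one,
      nonsing_inv_mul_cancel_left _ _ hS]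
    abel
  rw [hexpand]
  simp only [trace_add, trace_sub, trace_one]
  ring

end MatrixAlgebra

section PosDef

open scoped ComplexOrder MatrixOrder

variable {m n 𝕜 : Type*} [Fintype n] [RCLike 𝕜]

theorem trace_mul_nonneg_of_posSemidef {P R : Matrix n n 𝕜} (hP : P.PosSemidef)
    (hR : R.PosSemidef) : 0 ≤ (P * R).trace := by
  classical
  obtain ⟨C, rfl⟩ := CStarAlgebra.nonneg_iff_eq_star_mul_self.mp hR.nonneg
  rw [star_eq_conjTranspose, trace_mul_comm, Matrix.mul_assoc, trace_mul_comm]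
  exact (hP.mul_mul_conjTranspose_same C).trace_nonneg

theorem trace_mul_eq_zero_iff_of_posDef {P R : Matrix n n 𝕜} (hP : P.PosDef)
    (hR : R.PosSemidef) : (P * R).trace = 0 ↔ R = 0 := by
  classical
  refine ⟨fun h => ?_, fun h => by rw [h, Matrix.mul_zero, trace_zero]⟩
  obtain ⟨B, hB, rfl⟩ :=
    CStarAlgebra.isStrictlyPositive_iff_eq_star_mul_self.mp hP.isStrictlyPositive
  obtain ⟨C, rfl⟩ := CStarAlgebra.nonneg_iff_eq_star_mul_self.mp hR.nonneg
  simp only [star_eq_conjTranspose] at h ⊢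
  have hBC : B * Cᴴ = 0 := by
    rw [← trace_mul_conjTranspose_self_eq_zero_iff, ← h, Matrix.mul_assoc Bᴴ, trace_mul_comm Bᴴ]
    simp only [conjTranspose_mul, conjTranspose_conjTranspose, Matrix.mul_assoc]
  rw [hB.mul_right_eq_zero.mp hBC, Matrix.zero_mul]

theorem mul_mul_conjTranspose_eq_zero_iff_of_posDef {Q : Matrix n n 𝕜} (hQ : Q.PosDef)
    {D : Matrix m n 𝕜} : D * Q * Dᴴ = 0 ↔ D = 0 := by
  classical
  refine ⟨fun h => ?_, fun h => by rw [h, Matrix.zero_mul, Matrix.zero_mul]⟩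
  obtain ⟨B, hB, rfl⟩ :=
    CStarAlgebra.isStrictlyPositive_iff_eq_star_mul_self.mp hQ.isStrictlyPositive
  have hBD : B * Dᴴ = 0 := by
    rw [← conjTranspose_mul_self_eq_zero, ← h, star_eq_conjTranspose]
    simp only [conjTranspose_mul, conjTranspose_conjTranspose, Matrix.mul_assoc]
  rw [← conjTranspose_eq_zero,
    ← nonsing_inv_mul_cancel_left B Dᴴ ((isUnit_iff_isUnit_det B).mp hB), hBD, Matrix.mul_zero]

variable [DecidableEq n]

theorem two_mul_card_le_trace_inv_mul_add_trace_inv_mul {M S : Matrix n n 𝕜} (hM : M.PosDef)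
    (hS : S.PosDef) :
    2 * (Fintype.card n : 𝕜) ≤ (S⁻¹ * M).trace + (M⁻¹ * S).trace ∧
      ((S⁻¹ * M).trace + (M⁻¹ * S).trace = 2 * (Fintype.card n : 𝕜) ↔ M = S) := by
  have hD : (M - S)ᴴ = M - S := hM.isHermitian.sub hS.isHermitian
  have hgap := trace_inv_mul_sub_mul_inv_mul_sub hM.isUnit hS.isUnit
  nth_rw 2 [← hD] at hgap
  have hR := hM.inv.posSemidef.mul_mul_conjTranspose_same (M - S)
  rw [← sub_nonneg, ← sub_eq_zero, ← hgap, trace_mul_eq_zero_iff_of_posDef hS.inv hR,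
    mul_mul_conjTranspose_eq_zero_iff_of_posDef hM.inv, sub_eq_zero]
  exact ⟨trace_mul_nonneg_of_posSemidef hS.inv.posSemidef hR, Iff.rfl⟩

theorem card_sq_le_trace_inv_mul_mul_trace_inv_mul [Nonempty n] {M S : Matrix n n 𝕜}
    (hM : M.PosDef) (hS : S.PosDef) :
    (Fintype.card n : 𝕜) ^ 2 ≤ (S⁻¹ * M).trace * (M⁻¹ * S).trace ∧
      ((S⁻¹ * M).trace * (M⁻¹ * S).trace = (Fintype.card n : 𝕜) ^ 2 ↔
        M = ((S⁻¹ * M).trace / Fintype.card n) • S) := by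
  set k : 𝕜 := (Fintype.card n : 𝕜)
  set t := (S⁻¹ * M).trace with ht_def
  set u := (M⁻¹ * S).trace
  have hk : 0 < k := Nat.cast_pos.mpr Fintype.card_pos
  have ht : 0 < t :=
    (trace_mul_nonneg_of_posSemidef hS.inv.posSemidef hM.posSemidef).lt_of_ne' fun h =>
      hM.isUnit.ne_zero ((trace_mul_eq_zero_iff_of_posDef hS.inv hM.posSemidef).mp h)
  have hc : 0 < t / k := div_pos ht hk
  have hfst : ((((t / k) • S)⁻¹) * M).trace = k := by
    rw [nonsing_inv_smul_of_ne_zero hc.ne' hS.isUnit, Matrix.smul_mul, trace_smul,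
      smul_eq_mul, ← ht_def]
    field_simp [ht.ne']
  have hsnd : (M⁻¹ * ((t / k) • S)).trace = k⁻¹ * (t * u) := by
    rw [Matrix.mul_smul, trace_smul, smul_eq_mul]
    ring
  obtain ⟨hle, heq⟩ := two_mul_card_le_trace_inv_mul_add_trace_inv_mul hM (hS.smul hc)
  rw [hfst, hsnd, two_mul] at hle heq
  rw [add_le_add_iff_left, le_inv_mul_iff₀ hk, ← sq] at hle
  rw [add_right_inj, inv_mul_eq_iff_eq_mul₀ hk.ne', ← sq] at heq
  exact ⟨hle, heq⟩

end PosDef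

theorem sum_sq_add_two_mul_sum_lt {ι R : Type*} [Fintype ι] [LinearOrder ι] [CommSemiring R]
    (a : ι → R) :
    ∑ k, a k ^ 2 + 2 * ∑ p : {p : ι × ι // p.1 < p.2}, a p.1.1 * a p.1.2 = (∑ k, a k) ^ 2 := by
  have hlt : ∑ p : {p : ι × ι // p.1 < p.2}, a p.1.1 * a p.1.2
      = ∑ k, ∑ l, if k < l then a k * a l else 0 := by
    rw [← Finset.sum_subtype (Finset.univ.filter fun p : ι × ι => p.1 < p.2)
      (by simp) fun p => a p.1 * a p.2, Finset.sum_filter, Fintype.sum_prod_type]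
  have hgt : ∑ p : {p : ι × ι // p.1 < p.2}, a p.1.1 * a p.1.2
      = ∑ k, ∑ l, if l < k then a k * a l else 0 := by
    rw [hlt, Finset.sum_comm]
    simp only [mul_comm]
  have hdiag : ∑ k, a k ^ 2 = ∑ k, ∑ l, if k = l then a k * a l else 0 := by
    simp only [sq, Finset.sum_ite_eq, Finset.mem_univ, if_true]
  rw [two_mul, sq, Finset.sum_mul_sum, hdiag]
  nth_rw 1 [hlt]
  rw [hgt]
  simp only [← Finset.sum_add_distrib]
  refine Finset.sum_congr rfl fun k _ => Finset.sum_congr rfl fun l _ => ?_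
  rcases lt_trichotomy k l with h | h | h
  · simp [h, h.ne, h.not_gt]
  · simp [h]
  · simp [h, h.ne', h.not_gt]

theorem card_idx (d : ℕ) : Fintype.card (Idx d) = d * (d + 1) / 2 := by
  have h := sum_sq_add_two_mul_sum_lt fun _ : Fin d => 1
  simp only [one_pow, mul_one, Finset.sum_const, Finset.card_univ, smul_eq_mul,
    Fintype.card_fin] at h
  rw [Fintype.card_sum, Fintype.card_fin]
  have hsq : d * (d + 1) = d ^ 2 + d := by ring
  omega

theorem cast_card_idx (d : ℕ) : (Fintype.card (Idx d) : ℝ) = d * (d + 1) / 2 := by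
  rw [card_idx, Nat.cast_div_charZero (Nat.even_mul_succ_self d).two_dvd]
  push_cast
  rfl

theorem hvec_dotProduct_hvec {d : ℕ} (p q : Fin d → ℝ) : hvec p ⬝ᵥ hvec q = (p ⬝ᵥ q) ^ 2 := by
  rw [dotProduct, dotProduct, ← sum_sq_add_two_mul_sum_lt, Fintype.sum_sum_type, Finset.mul_sum]
  have hsqrt : Real.sqrt 2 * Real.sqrt 2 = 2 := Real.mul_self_sqrt zero_le_two
  congr 1 <;> refine Finset.sum_congr rfl fun k _ => ?_
  · simp only [hvec, Sum.elim_inl, mul_pow]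
  · simp only [hvec, Sum.elim_inr]
    linear_combination (p k.1.1 * p k.1.2 * q k.1.1 * q k.1.2) * hsqrt

theorem oneVec_dotProduct_hvec {d : ℕ} (q : Fin d → ℝ) : oneVec d ⬝ᵥ hvec q = q ⬝ᵥ q := by
  simp [dotProduct, oneVec, hvec, sq]

theorem oneVec_dotProduct_self (d : ℕ) : oneVec d ⬝ᵥ oneVec d = d := by
  simp [dotProduct, oneVec]

theorem posDef_Jmat_add_two_smul_one (d : ℕ) :
    (Jmat d + (2 : ℝ) • (1 : Matrix (Idx d) (Idx d) ℝ)).PosDef :=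
  PosDef.posSemidef_add (posSemidef_vecMulVec_self_star (oneVec d)) (PosDef.one.smul two_pos)

theorem trace_inv_Jmat_add_two_smul_one_mul {d : ℕ} (M : Matrix (Idx d) (Idx d) ℝ) :
    ((Jmat d + (2 : ℝ) • (1 : Matrix (Idx d) (Idx d) ℝ))⁻¹ * M).trace
      = (M.trace - (Jmat d * M).trace / (d + 2)) / 2 := by
  have hd : oneVec d ⬝ᵥ oneVec d + 2 ≠ 0 := by
    rw [oneVec_dotProduct_self]
    positivity
  rw [Jmat, inv_vecMulVec_add_smul_one two_ne_zero hd, oneVec_dotProduct_self]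
  simp only [Matrix.smul_mul, Matrix.sub_mul, Matrix.one_mul, trace_smul, trace_sub, smul_eq_mul]
  ring

theorem trace_inv_Jmat_add_two_smul_one_mul_of_trace_eq {d : ℕ} (hd : 0 < d)
    {M : Matrix (Idx d) (Idx d) ℝ} {t : ℝ} (htrace : M.trace = t)
    (hJ : (Jmat d * M).trace = t) :
    ((Jmat d + (2 : ℝ) • (1 : Matrix (Idx d) (Idx d) ℝ))⁻¹ * M).trace
      = t / (d * (d + 2)) * Fintype.card (Idx d) := by
  have hd₀ : (d : ℝ) ≠ 0 := Nat.cast_ne_zero.mpr hd.ne'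
  have hd₂ : (d : ℝ) + 2 ≠ 0 := by positivity
  rw [trace_inv_Jmat_add_two_smul_one_mul, htrace, hJ, cast_card_idx]
  field_simp
  ring

theorem stmt_6_general {d N : ℕ} (hd : 0 < d) (A : Matrix (Fin N) (Idx d) ℝ)
    (htrace : (Aᵀ * A).trace = N) (hJ : (Jmat d * (Aᵀ * A)).trace = N)
    (hrank : A.rank = d * (d + 1) / 2) :
    1 ≤ Ccost A ∧
      (Ccost A = 1 ↔
        Aᵀ * A = ((N : ℝ) / ((d : ℝ) * ((d : ℝ) + 2))) •
          (Jmat d + (2 : ℝ) • (1 : Matrix (Idx d) (Idx d) ℝ))) := by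
  have : Nonempty (Idx d) := ⟨Sum.inl ⟨0, hd⟩⟩
  have hcard : (0 : ℝ) < Fintype.card (Idx d) := Nat.cast_pos.mpr Fintype.card_pos
  set W := Jmat d + (2 : ℝ) • (1 : Matrix (Idx d) (Idx d) ℝ) with hW
  have hWM : (W⁻¹ * (Aᵀ * A)).trace = N / (d * (d + 2)) * Fintype.card (Idx d) :=
    trace_inv_Jmat_add_two_smul_one_mul_of_trace_eq hd htrace hJ
  have hC : Ccost A
      = (W⁻¹ * (Aᵀ * A)).trace * ((Aᵀ * A)⁻¹ * W).trace / (Fintype.card (Idx d) : ℝ) ^ 2 := by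
    rw [Ccost, hWM, ← card_idx, ← hW]
    field_simp
  have hM : (Aᵀ * A).PosDef :=
    PosDef.conjTranspose_mul_self A <|
      mulVec_injective_of_rank_eq_card (hrank.trans (card_idx d).symm)
  have hscale : N / (d * ((d : ℝ) + 2)) = (W⁻¹ * (Aᵀ * A)).trace / Fintype.card (Idx d) := by
    rw [hWM, mul_div_cancel_right₀ _ hcard.ne']
  rw [hC, one_le_div (by positivity), div_eq_one_iff_eq (by positivity), hscale]
  exact card_sq_le_trace_inv_mul_mul_trace_inv_mul hM (posDef_Jmat_add_two_smul_one d)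

/-- Lower bound on the C-cost and its equality condition. -/
theorem stmt_6 {d N : ℕ} (hd : 0 < d) (hN : d * (d + 1) / 2 ≤ N)
    (q : Fin N → Fin d → ℝ) (hq : ∀ i, ∑ k, q i k ^ 2 = 1)
    (A : Matrix (Fin N) (Idx d) ℝ) (hA : ∀ i, A i = hvec (q i))
    (hrank : A.rank = d * (d + 1) / 2) :
    1 ≤ Ccost A ∧
      (Ccost A = 1 ↔
        Aᵀ * A = ((N : ℝ) / ((d : ℝ) * ((d : ℝ) + 2))) •
          (Jmat d + (2 : ℝ) • (1 : Matrix (Idx d) (Idx d) ℝ))) := by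
  have hunit (i : Fin N) : q i ⬝ᵥ q i = 1 := by
    simpa only [dotProduct, sq] using hq i
  refine stmt_6_general hd A ?_ ?_ hrank
  · simp [trace_transpose_mul_self, hA, hvec_dotProduct_hvec, hunit]
  · simp [Jmat, trace_vecMulVec_self_mul_transpose_mul_self, hA, oneVec_dotProduct_hvec, hunit]
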